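/- arXiv:1209.4971 — 5 statements merged into one kernel-verified Lean document; each statement's English description precedes it below -/
import Mathlib

section
/- Average encoding theorem: Let X and Y be random variables on a probability space taking values in finite types. Then E_{y←Y} h²(P_{X|Y=y}, P_X) ≤ (ln 2 / 2) · I(X:Y), where the expectation is over y drawn from the distribution of Y (restricted to y with positive probability), P_X denotes the distribution of X, P_{X|Y=y} the conditional distribution of X given Y = y, and I(X:Y) is the mutual information measured in bits. -/
/-!
The theorem is the averaged form of the bound `h²(P, Q) ≤ D(P‖Q) / 2` (divergence in nats), because
`I(X:Y)` is the average over `y` of `D(P_{X|Y=y} ‖ P_X)`.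

Write `r = P(X = s, Y = y)`, `p = P(X = s)` and `q = P(Y = y)`. The inequality `log x ≤ x - 1` at
`x = √(pq/r)`, multiplied by `2r`, gives `2r - 2√(rpq) ≤ r log (r / (pq))`. Since `q (√(r/q) - √p)² = r + pq - 2√(rpq)`,
this is the pointwise bound `average_encoding_term`. Summed over all `(s, y)`, its
correction `pq - r` vanishes, as both the joint law and the product of the marginals have total
mass one, and what remains of the right-hand side is `I(X:Y)` in nats.
-/

open MeasureTheory

/-- Distribution of a random variable `X` on a finite type: `P_X(s) = μ(X = s)`. -/
noncomputable def distOf {Ω : Type*} [MeasurableSpace Ω] (μ : Measure Ω)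
    {S : Type*} (X : Ω → S) (s : S) : ℝ :=
  (μ (X ⁻¹' {s})).toReal

/-- Conditional distribution of `X` given `Y = y`: `P_{X|Y=y}(s) = μ(X = s ∧ Y = y)/μ(Y = y)`. -/
noncomputable def condDistOf {Ω : Type*} [MeasurableSpace Ω] (μ : Measure Ω)
    {S U : Type*} (X : Ω → S) (Y : Ω → U) (y : U) (s : S) : ℝ :=
  (μ (X ⁻¹' {s} ∩ Y ⁻¹' {y})).toReal / (μ (Y ⁻¹' {y})).toReal

/-- Shannon entropy (base 2) of a random variable taking values in a finite type
(with the convention `0·log 0 = 0`, which holds since `Real.logb 2 0 = 0`). -/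
noncomputable def entropy {Ω : Type*} [MeasurableSpace Ω] (μ : Measure Ω)
    {S : Type*} [Fintype S] (X : Ω → S) : ℝ :=
  ∑ s, -(distOf μ X s * Real.logb 2 (distOf μ X s))

/-- Mutual information `I(X:Y) = H(X) + H(Y) − H(X,Y)` (in bits). -/
noncomputable def mutualInfo {Ω : Type*} [MeasurableSpace Ω] (μ : Measure Ω)
    {S U : Type*} [Fintype S] [Fintype U] (X : Ω → S) (Y : Ω → U) : ℝ :=
  entropy μ X + entropy μ Y - entropy μ (fun ω => (X ω, Y ω))

/-- Squared Hellinger distance between two (probability mass) functions on a finite type. -/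
noncomputable def hellingerSq {T : Type*} [Fintype T] (P Q : T → ℝ) : ℝ :=
  (1 / 2) * ∑ t, (Real.sqrt (P t) - Real.sqrt (Q t)) ^ 2

/-- The contribution of a pair `(s, y)`, with `r`, `p`, `q` the joint and the two marginal
probabilities. The bounds `r ≤ p` and `r ≤ q` settle the degenerate cases: a vanishing marginal
forces `r = 0`. -/
theorem average_encoding_term {r p q : ℝ} (hr : 0 ≤ r) (hrp : r ≤ p) (hrq : r ≤ q) :
    q * (√(r / q) - √p) ^ 2 ≤
      r * (Real.log r - Real.log p - Real.log q) + p * q - r := by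
  rcases hr.eq_or_lt with rfl | hr0
  -- If `r = 0`, both sides equal `p * q`.
  · simp only [zero_div, Real.sqrt_zero, zero_sub, neg_sq, Real.sq_sqrt hrp]
    linarith
  have hp : 0 < p := hr0.trans_le hrp
  have hq : 0 < q := hr0.trans_le hrq
  -- Passing to square roots `a`, `b`, `c` of `r`, `p`, `q` makes the claim polynomial, apart from
  -- the logarithms; the left-hand side becomes `(a - b * c) ^ 2`.
  obtain ⟨a, ha, rfl⟩ : ∃ a, 0 < a ∧ r = a ^ 2 :=
    ⟨√r, Real.sqrt_pos.2 hr0, (Real.sq_sqrt hr).symm⟩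
  obtain ⟨b, hb, rfl⟩ : ∃ b, 0 < b ∧ p = b ^ 2 :=
    ⟨√p, Real.sqrt_pos.2 hp, (Real.sq_sqrt hp.le).symm⟩
  obtain ⟨c, hc, rfl⟩ : ∃ c, 0 < c ∧ q = c ^ 2 :=
    ⟨√q, Real.sqrt_pos.2 hq, (Real.sq_sqrt hq.le).symm⟩
  rw [← div_pow, Real.sqrt_sq (by positivity), Real.sqrt_sq hb.le]
  have hlog := Real.log_le_sub_one_of_pos (show 0 < b * c / a by positivity)
  rw [Real.log_div (by positivity) ha.ne', Real.log_mul hb.ne' hc.ne'] at hlog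
  have hmul := mul_le_mul_of_nonneg_left hlog (sq_nonneg a)
  have hleft : c ^ 2 * (a / c - b) ^ 2 = (a - b * c) ^ 2 := by
    field_simp
  have hright : a ^ 2 * (b * c / a - 1) = a * (b * c) - a ^ 2 := by
    field_simp
  rw [hleft]
  rw [hright] at hmul
  simp only [Real.log_pow]
  push_cast
  nlinarith [hmul]

theorem sum_real_inter_preimage_singleton {Ω U : Type*} [MeasurableSpace Ω]
    [MeasurableSpace U] [MeasurableSingletonClass U] [Fintype U]
    (μ : Measure Ω) [IsProbabilityMeasure μ] (A : Set Ω) {Y : Ω → U} (hY : Measurable Y) :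
    ∑ y, (μ (A ∩ Y ⁻¹' {y})).toReal = (μ A).toReal := by
  have hm (y : U) : MeasurableSet (Y ⁻¹' {y}) := hY (measurableSet_singleton y)
  have h := sum_measure_preimage_singleton (μ := μ.restrict A) (f := Y) Finset.univ
    fun y _ => hm y
  rw [Finset.coe_univ, Set.preimage_univ, Measure.restrict_apply_univ] at h
  rw [← h, ENNReal.toReal_sum fun y _ => measure_ne_top _ _]
  refine Finset.sum_congr rfl fun y _ => ?_
  rw [Measure.restrict_apply (hm y), Set.inter_comm]

theorem log_two_mul_entropy {Ω T : Type*} [MeasurableSpace Ω] [Fintype T] (μ : Measure Ω)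
    (Z : Ω → T) :
    Real.log 2 * entropy μ Z = -∑ t, distOf μ Z t * Real.log (distOf μ Z t) := by
  have hlog2 : Real.log 2 ≠ 0 := (Real.log_pos one_lt_two).ne'
  rw [entropy, Finset.mul_sum, ← Finset.sum_neg_distrib]
  refine Finset.sum_congr rfl fun t _ => ?_
  rw [Real.logb]
  field_simp

/-- Average encoding theorem: `E_{y←Y} h²(P_{X|Y=y}, P_X) ≤ (ln 2 / 2) · I(X:Y)`. -/
theorem average_encoding
    {Ω S U : Type*} [MeasurableSpace Ω]
    [MeasurableSpace S] [MeasurableSingletonClass S] [Fintype S]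
    [MeasurableSpace U] [MeasurableSingletonClass U] [Fintype U]
    (μ : Measure Ω) [IsProbabilityMeasure μ]
    (X : Ω → S) (Y : Ω → U) (hX : Measurable X) (hY : Measurable Y) :
    ∑ y, distOf μ Y y * hellingerSq (condDistOf μ X Y y) (distOf μ X) ≤
      (Real.log 2 / 2) * mutualInfo μ X Y := by
  set p := distOf μ X with hp
  set q := distOf μ Y with hq
  set r : S → U → ℝ := fun s y => (μ (X ⁻¹' {s} ∩ Y ⁻¹' {y})).toReal with hr
  have hjoint (z : S × U) : distOf μ (fun ω => (X ω, Y ω)) z = r z.1 z.2 := by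
    simp only [distOf, hr]
    congr 2
    ext ω
    simp [Prod.ext_iff]
  have hrow (s : S) : ∑ y, r s y = p s := sum_real_inter_preimage_singleton μ _ hY
  have hcol (y : U) : ∑ s, r s y = q y := by
    rw [hq, distOf, ← sum_real_inter_preimage_singleton μ (Y ⁻¹' {y}) hX]
    simp only [hr, Set.inter_comm]
  have hp1 : ∑ s, p s = 1 := by
    simpa [hp, distOf] using sum_real_inter_preimage_singleton μ Set.univ hX
  have hr0 (s : S) (y : U) : 0 ≤ r s y := ENNReal.toReal_nonneg
  have hrp (s : S) (y : U) : r s y ≤ p s :=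
    ENNReal.toReal_mono (measure_ne_top _ _) (measure_mono Set.inter_subset_left)
  have hrq (s : S) (y : U) : r s y ≤ q y :=
    ENNReal.toReal_mono (measure_ne_top _ _) (measure_mono Set.inter_subset_right)
  have hX' : ∑ y, ∑ s, r s y * Real.log (p s) = ∑ s, p s * Real.log (p s) := by
    rw [Finset.sum_comm]
    simp only [← Finset.sum_mul, hrow]
  have hY' : ∑ y, ∑ s, r s y * Real.log (q y) = ∑ y, q y * Real.log (q y) := by
    simp only [← Finset.sum_mul, hcol]
  have hXY : Real.log 2 * entropy μ (fun ω => (X ω, Y ω)) =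
      -∑ y, ∑ s, r s y * Real.log (r s y) := by
    rw [log_two_mul_entropy, Fintype.sum_prod_type_right]
    simp only [hjoint]
  have hinfo : Real.log 2 * mutualInfo μ X Y =
      ∑ y, ∑ s, r s y * (Real.log (r s y) - Real.log (p s) - Real.log (q y)) := by
    simp only [mul_sub, Finset.sum_sub_distrib, hX', hY']
    rw [mutualInfo, mul_sub, mul_add, hXY, log_two_mul_entropy, log_two_mul_entropy]
    ring
  -- Both totals are `1`, so the correction terms cancel in the sum.
  have hmass : ∑ y, ∑ s, p s * q y = ∑ y, ∑ s, r s y := by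
    simp only [← Finset.sum_mul, hp1, hcol, one_mul]
  have hsum : ∑ y, ∑ s, q y * (√(r s y / q y) - √(p s)) ^ 2 ≤
      Real.log 2 * mutualInfo μ X Y := by
    calc _ ≤ ∑ y, ∑ s, (r s y * (Real.log (r s y) - Real.log (p s) - Real.log (q y))
            + p s * q y - r s y) :=
          Finset.sum_le_sum fun y _ => Finset.sum_le_sum fun s _ =>
            average_encoding_term (hr0 s y) (hrp s y) (hrq s y)
      _ = _ := by
          simp only [Finset.sum_sub_distrib, Finset.sum_add_distrib] at hinfo ⊢
          rw [hinfo, hmass]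
          ring
  have hleft : ∑ y, q y * hellingerSq (condDistOf μ X Y y) p =
      (1 / 2) * ∑ y, ∑ s, q y * (√(r s y / q y) - √(p s)) ^ 2 := by
    rw [Finset.mul_sum]
    refine Finset.sum_congr rfl fun y _ => ?_
    rw [hellingerSq, ← Finset.mul_sum]
    simp only [condDistOf, hr, hq, distOf]
    ring
  rw [hleft]
  linarith
end

section
/- Cut-and-paste property: Let 𝒳, 𝒴 be sets and T a finite type, and suppose that for each (x,y) ∈ 𝒳 × 𝒴 a probability mass function p_{x,y} on T has product form, i.e., there are nonnegative functions a_x : T → ℝ≥0 (for x ∈ 𝒳) and b_y : T → ℝ≥0 (for y ∈ 𝒴) with p_{x,y}(t) = a_x(t) · b_y(t) for all t. Then for all x, u ∈ 𝒳 and y, v ∈ 𝒴, h(p_{x,y}, p_{u,v}) = h(p_{x,v}, p_{u,y}). -/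
/-! Expanding the square, `h(P, Q)² = 1 - ∑ t, √(P t) √(Q t)` for probability mass functions `P`, `Q`.
In product form the affinity `∑ t, √(P t) √(Q t)` of `p x y` and `p u v` is
`∑ t, √(a x t) √(b y t) √(a u t) √(b v t)`, which is unchanged when `y` and `v` are swapped. -/

/-- A probability mass function on a finite type: nonnegative and sums to 1. -/
def IsPmf {T : Type*} [Fintype T] (P : T → ℝ) : Prop :=
  (∀ t, 0 ≤ P t) ∧ ∑ t, P t = 1

/-- Hellinger distance between two (probability mass) functions on a finite type. -/
noncomputable def hellinger {T : Type*} [Fintype T] (P Q : T → ℝ) : ℝ :=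
  Real.sqrt ((1 / 2) * ∑ t, (Real.sqrt (P t) - Real.sqrt (Q t)) ^ 2)

theorem sum_sq_sqrt_sub_sqrt {T : Type*} [Fintype T] {P Q : T → ℝ} (hP : IsPmf P) (hQ : IsPmf Q) :
    ∑ t, (Real.sqrt (P t) - Real.sqrt (Q t)) ^ 2 =
      2 - 2 * ∑ t, Real.sqrt (P t) * Real.sqrt (Q t) := by
  have h : ∀ t, (Real.sqrt (P t) - Real.sqrt (Q t)) ^ 2 =
      P t + Q t - 2 * (Real.sqrt (P t) * Real.sqrt (Q t)) := fun t => by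
    rw [sub_sq, Real.sq_sqrt (hP.1 t), Real.sq_sqrt (hQ.1 t)]
    ring
  simp only [h, Finset.sum_sub_distrib, Finset.sum_add_distrib, ← Finset.mul_sum, hP.2, hQ.2]
  norm_num

/-- Cut-and-paste property: if the probability mass functions `p x y` have product form
`p x y t = a x t * b y t`, then `h(p x y, p u v) = h(p x v, p u y)`. -/
theorem hellinger_cut_and_paste
    {𝒳 𝒴 T : Type*} [Fintype T]
    (p : 𝒳 → 𝒴 → T → ℝ) (a : 𝒳 → T → ℝ) (b : 𝒴 → T → ℝ)
    (ha : ∀ x t, 0 ≤ a x t) (hb : ∀ y t, 0 ≤ b y t)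
    (hprod : ∀ x y t, p x y t = a x t * b y t)
    (hpmf : ∀ x y, IsPmf (p x y))
    (x u : 𝒳) (y v : 𝒴) :
    hellinger (p x y) (p u v) = hellinger (p x v) (p u y) := by
  unfold hellinger
  rw [sum_sq_sqrt_sub_sqrt (hpmf x y) (hpmf u v), sum_sq_sqrt_sub_sqrt (hpmf x v) (hpmf u y)]
  have h : ∀ t, Real.sqrt (p x y t) * Real.sqrt (p u v t) =
      Real.sqrt (p x v t) * Real.sqrt (p u y t) := fun t => by
    simp only [hprod, Real.sqrt_mul (ha _ t)]
    ring
  simp only [h]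
end

section
/- Let X, Y, Z, R be random variables on a probability space taking values in finite types, such that X and Z are conditionally independent given R (i.e., conditioned on R = r for every value r of positive probability, X and Z are independent). Then I(X : Y | Z, R) ≥ I(X : Y | R), where conditioning on (Z,R) means conditioning on the pair ⟨Z,R⟩. -/
/-! The chain rule for `I(X : Y, Z | R)`, expanded in its two possible orders, gives
`I(X:Y|Z,R) - I(X:Y|R) = I(X:Z|Y,R) - I(X:Z|R)`. On the right the first term is nonnegative
(`condMutualInfo_nonneg`) and the second vanishes by conditional independence
(`condMutualInfo_eq_zero_of_condIndep`). Both facts are read off the formula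
`I(A:B|C) = ∑ p(a,b,c) (log p(a,b,c) + log p(c) - log p(a,c) - log p(b,c))`
(`condMutualInfo_eq_sum`); nonnegativity is then Gibbs' inequality, that is, `log x ≤ x - 1`
compared with the weights `p(a,c) p(b,c) / p(c)`. -/

open MeasureTheory

/-- Conditional mutual information `I(X:Y|Z) = H(X,Z) + H(Y,Z) − H(X,Y,Z) − H(Z)` (in bits). -/
noncomputable def condMutualInfo {Ω : Type*} [MeasurableSpace Ω] (μ : Measure Ω)
    {S U V : Type*} [Fintype S] [Fintype U] [Fintype V]
    (X : Ω → S) (Y : Ω → U) (Z : Ω → V) : ℝ :=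
  entropy μ (fun ω => (X ω, Z ω)) + entropy μ (fun ω => (Y ω, Z ω)) -
    entropy μ (fun ω => (X ω, Y ω, Z ω)) - entropy μ Z

section Aux

set_option linter.unusedSectionVars false

variable {Ω : Type*} [MeasurableSpace Ω] (μ : Measure Ω) [IsProbabilityMeasure μ]

lemma distOf_nonneg {S : Type*} (X : Ω → S) (s : S) : 0 ≤ distOf μ X s :=
  ENNReal.toReal_nonneg

/-- The law of `f(J)` is the law of `J` summed over the fibres of `f`. -/
lemma sum_fiber_distOf {T S : Type*} [MeasurableSpace T] [MeasurableSingletonClass T] [Fintype T]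
    [DecidableEq S] {J : Ω → T} (hJ : Measurable J) (f : T → S) (s : S) :
    ∑ t with f t = s, distOf μ J t = distOf μ (fun ω => f (J ω)) s := by
  have h := sum_measureReal_preimage_singleton (μ := μ) (Finset.univ.filter fun t => f t = s)
    (f := J) (fun t _ => hJ (measurableSet_singleton t))
  simp only [Measure.real] at h
  simp only [distOf]
  rw [h]
  congr 2
  ext ω
  simp

lemma distOf_le_distOf_comp {T S : Type*} (J : Ω → T) (f : T → S) (t : T) :
    distOf μ J t ≤ distOf μ (fun ω => f (J ω)) (f t) := by
  refine ENNReal.toReal_mono (measure_ne_top _ _) (measure_mono ?_)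
  intro ω hω
  simp only [Set.mem_preimage, Set.mem_singleton_iff] at hω ⊢
  rw [hω]

/-- The entropy of `f(J)` as a sum over the values of `J`, which puts the entropies of all
marginals of `J` over one index set. -/
lemma entropy_comp {T S : Type*} [MeasurableSpace T] [MeasurableSingletonClass T] [Fintype T]
    [Fintype S] {J : Ω → T} (hJ : Measurable J) (f : T → S) :
    entropy μ (fun ω => f (J ω)) =
      -∑ t, distOf μ J t * Real.logb 2 (distOf μ (fun ω => f (J ω)) (f t)) := by
  classical
  rw [entropy, Finset.sum_neg_distrib, ← Finset.sum_fiberwise Finset.univ f]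
  congr 1
  refine Finset.sum_congr rfl fun s _ => ?_
  conv_lhs => rw [← sum_fiber_distOf μ hJ f s, Finset.sum_mul]
  refine Finset.sum_congr rfl fun t ht => ?_
  rw [sum_fiber_distOf μ hJ f s, (Finset.mem_filter.1 ht).2]

lemma entropy_comp_equiv {T S : Type*} [Fintype T] [Fintype S] (J : Ω → T) (e : T ≃ S) :
    entropy μ (fun ω => e (J ω)) = entropy μ J := by
  have h (t : T) : distOf μ (fun ω => e (J ω)) (e t) = distOf μ J t := by
    simp only [distOf]
    congr 2
    ext ω
    simp
  simp only [entropy]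
  rw [← Equiv.sum_comp e]
  simp only [h]

lemma sum_distOf_fst {S T : Type*} [MeasurableSpace S] [MeasurableSingletonClass S] [Fintype S]
    [MeasurableSpace T] [MeasurableSingletonClass T] [Fintype T]
    {A : Ω → S} {C : Ω → T} (hA : Measurable A) (hC : Measurable C) (c : T) :
    ∑ a, distOf μ (fun ω => (A ω, C ω)) (a, c) = distOf μ C c := by
  classical
  rw [← sum_fiber_distOf μ (hA.prodMk hC) Prod.snd c, Finset.sum_filter, Fintype.sum_prod_type]
  simp

lemma sum_distOf {T : Type*} [MeasurableSpace T] [MeasurableSingletonClass T] [Fintype T]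
    {J : Ω → T} (hJ : Measurable J) : ∑ t, distOf μ J t = 1 := by
  have h := sum_fiber_distOf μ hJ (fun _ => ()) ()
  simpa [distOf] using h

variable {S U V : Type*}
  [MeasurableSpace S] [MeasurableSingletonClass S] [Fintype S]
  [MeasurableSpace U] [MeasurableSingletonClass U] [Fintype U]
  [MeasurableSpace V] [MeasurableSingletonClass V] [Fintype V]
  {A : Ω → S} {B : Ω → U} {C : Ω → V}

lemma condMutualInfo_eq_sum (hA : Measurable A) (hB : Measurable B) (hC : Measurable C) :
    condMutualInfo μ A B C = ∑ t : S × U × V, distOf μ (fun ω => (A ω, B ω, C ω)) t *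
      (Real.logb 2 (distOf μ (fun ω => (A ω, B ω, C ω)) t) + Real.logb 2 (distOf μ C t.2.2)
        - Real.logb 2 (distOf μ (fun ω => (A ω, C ω)) (t.1, t.2.2))
        - Real.logb 2 (distOf μ (fun ω => (B ω, C ω)) t.2)) := by
  have hJ : Measurable fun ω => (A ω, B ω, C ω) := hA.prodMk (hB.prodMk hC)
  have h1 := entropy_comp μ hJ (fun t => (t.1, t.2.2))
  have h2 := entropy_comp μ hJ (fun t => t.2)
  have h3 := entropy_comp μ hJ (fun t => t)
  have h4 := entropy_comp μ hJ (fun t => t.2.2)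
  simp only at h1 h2 h3 h4
  rw [condMutualInfo, h1, h2, h3, h4]
  simp only [mul_sub, mul_add, Finset.sum_sub_distrib, Finset.sum_add_distrib]
  ring

/-- A value of positive probability has marginals of positive probability, so that no logarithm
in `condMutualInfo_eq_sum` with nonzero weight is taken at `0`. -/
lemma marginals_pos {t : S × U × V} (ht : 0 < distOf μ (fun ω => (A ω, B ω, C ω)) t) :
    0 < distOf μ C t.2.2 ∧ 0 < distOf μ (fun ω => (A ω, C ω)) (t.1, t.2.2) ∧
      0 < distOf μ (fun ω => (B ω, C ω)) t.2 :=
  ⟨ht.trans_le (distOf_le_distOf_comp μ _ (fun t => t.2.2) t),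
    ht.trans_le (distOf_le_distOf_comp μ _ (fun t => (t.1, t.2.2)) t),
    ht.trans_le (distOf_le_distOf_comp μ _ (fun t => t.2) t)⟩

/-- The comparison weights `p(a,c) p(b,c) / p(c)` have total mass `1`. -/
lemma sum_condProd (hA : Measurable A) (hB : Measurable B) (hC : Measurable C) :
    ∑ t : S × U × V, distOf μ (fun ω => (A ω, C ω)) (t.1, t.2.2) *
      distOf μ (fun ω => (B ω, C ω)) t.2 / distOf μ C t.2.2 = 1 := by
  rw [Fintype.sum_prod_type, Finset.sum_comm]
  simp only [← Finset.sum_div, ← Finset.sum_mul, sum_distOf_fst μ hA hC]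
  rw [← sum_distOf μ (hB.prodMk hC)]
  refine Finset.sum_congr rfl fun t _ => ?_
  -- Where `p(c) = 0` the quotient is `0` by convention, and `p(b,c) = 0` as well.
  by_cases h : distOf μ C t.2 = 0
  · have h1 := distOf_le_distOf_comp μ (fun ω => (B ω, C ω)) (fun t => t.2) t
    have h2 := distOf_nonneg μ (fun ω => (B ω, C ω)) t
    simp only [h] at h1
    simp [h, le_antisymm h1 h2]
  · field_simp

lemma condMutualInfo_nonneg (hA : Measurable A) (hB : Measurable B) (hC : Measurable C) :
    0 ≤ condMutualInfo μ A B C := by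
  have key : (0 : ℝ) = ∑ t : S × U × V, (distOf μ (fun ω => (A ω, B ω, C ω)) t -
      distOf μ (fun ω => (A ω, C ω)) (t.1, t.2.2) *
      distOf μ (fun ω => (B ω, C ω)) t.2 / distOf μ C t.2.2) / Real.log 2 := by
    rw [← Finset.sum_div, Finset.sum_sub_distrib, sum_condProd μ hA hB hC,
      sum_distOf μ (hA.prodMk (hB.prodMk hC))]
    simp
  rw [condMutualInfo_eq_sum μ hA hB hC, key]
  refine Finset.sum_le_sum fun t _ => ?_
  have hl : 0 < Real.log 2 := Real.log_pos one_lt_two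
  have hac := distOf_nonneg μ (fun ω => (A ω, C ω)) (t.1, t.2.2)
  have hbc := distOf_nonneg μ (fun ω => (B ω, C ω)) t.2
  have hc := distOf_nonneg μ C t.2.2
  rcases (distOf_nonneg μ (fun ω => (A ω, B ω, C ω)) t).eq_or_lt with h0 | hp
  · rw [← h0, zero_mul, zero_sub]
    exact div_nonpos_of_nonpos_of_nonneg (neg_nonpos.2 (by positivity)) hl.le
  · obtain ⟨hc', hac', hbc'⟩ := marginals_pos μ hp
    simp only [Real.logb, ← sub_div, ← add_div]
    rw [← mul_div_assoc]
    refine div_le_div_of_nonneg_right ?_ hl.le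
    generalize distOf μ (fun ω => (A ω, B ω, C ω)) t = p at *
    generalize distOf μ (fun ω => (A ω, C ω)) (t.1, t.2.2) = x at *
    generalize distOf μ (fun ω => (B ω, C ω)) t.2 = y at *
    generalize distOf μ C t.2.2 = c at *
    have h := Real.log_le_sub_one_of_pos (x := x * y / c / p) (by positivity)
    rw [Real.log_div (by positivity) hp.ne', Real.log_div (by positivity) hc'.ne',
      Real.log_mul hac'.ne' hbc'.ne'] at h
    have h' := mul_le_mul_of_nonneg_left h hp.le
    have e : p * (x * y / c / p - 1) = x * y / c - p := by field_simp
    rw [e] at h'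
    linarith

lemma condMutualInfo_eq_zero_of_condIndep
    (hA : Measurable A) (hB : Measurable B) (hC : Measurable C)
    (h : ∀ a b c, distOf μ C c ≠ 0 →
      distOf μ (fun ω => (A ω, B ω, C ω)) (a, b, c) * distOf μ C c =
        distOf μ (fun ω => (A ω, C ω)) (a, c) * distOf μ (fun ω => (B ω, C ω)) (b, c)) :
    condMutualInfo μ A B C = 0 := by
  rw [condMutualInfo_eq_sum μ hA hB hC]
  refine Finset.sum_eq_zero fun t _ => ?_
  rcases (distOf_nonneg μ (fun ω => (A ω, B ω, C ω)) t).eq_or_lt with h0 | hp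
  · rw [← h0, zero_mul]
  · obtain ⟨hc', hac', hbc'⟩ := marginals_pos μ hp
    have e := congrArg (Real.logb 2) (h t.1 t.2.1 t.2.2 hc'.ne')
    rw [Real.logb_mul hp.ne' hc'.ne', Real.logb_mul hac'.ne' hbc'.ne'] at e
    rw [e]
    ring

end Aux

/-- If `X` and `Z` are conditionally independent given `R`, then
`I(X : Y | Z, R) ≥ I(X : Y | R)`. -/
theorem condMutualInfo_pair_ge_of_condIndep
    {Ω S U V W : Type*} [MeasurableSpace Ω]
    [MeasurableSpace S] [MeasurableSingletonClass S] [Fintype S]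
    [MeasurableSpace U] [MeasurableSingletonClass U] [Fintype U]
    [MeasurableSpace V] [MeasurableSingletonClass V] [Fintype V]
    [MeasurableSpace W] [MeasurableSingletonClass W] [Fintype W]
    (μ : Measure Ω) [IsProbabilityMeasure μ]
    (X : Ω → S) (Y : Ω → U) (Z : Ω → V) (R : Ω → W)
    (hX : Measurable X) (hY : Measurable Y) (hZ : Measurable Z) (hR : Measurable R)
    (hindep : ∀ r : W, μ (R ⁻¹' {r}) ≠ 0 → ∀ (x : S) (z : V),
      (μ (X ⁻¹' {x} ∩ Z ⁻¹' {z} ∩ R ⁻¹' {r})).toReal * (μ (R ⁻¹' {r})).toReal =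
        (μ (X ⁻¹' {x} ∩ R ⁻¹' {r})).toReal * (μ (Z ⁻¹' {z} ∩ R ⁻¹' {r})).toReal) :
    condMutualInfo μ X Y R ≤ condMutualInfo μ X Y (fun ω => (Z ω, R ω)) := by
  have hnn := condMutualInfo_nonneg μ hX hZ (hY.prodMk hR)
  have hzero : condMutualInfo μ X Z R = 0 := by
    refine condMutualInfo_eq_zero_of_condIndep μ hX hZ hR fun x z r hr => ?_
    have h := hindep r (fun h0 => hr (by simp [distOf, h0])) x z
    have e1 : (fun ω => (X ω, Z ω, R ω)) ⁻¹' {(x, z, r)} =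
        X ⁻¹' {x} ∩ Z ⁻¹' {z} ∩ R ⁻¹' {r} := by
      ext ω
      simp [and_assoc]
    have e2 : (fun ω => (X ω, R ω)) ⁻¹' {(x, r)} = X ⁻¹' {x} ∩ R ⁻¹' {r} := by
      ext ω
      simp
    have e3 : (fun ω => (Z ω, R ω)) ⁻¹' {(z, r)} = Z ⁻¹' {z} ∩ R ⁻¹' {r} := by
      ext ω
      simp
    simpa only [distOf, e1, e2, e3] using h
  let e : U × V × W ≃ V × U × W :=
    ⟨fun t => (t.2.1, t.1, t.2.2), fun t => (t.2.1, t.1, t.2.2), fun _ => rfl, fun _ => rfl⟩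
  have h1 : entropy μ (fun ω => (Z ω, Y ω, R ω)) = entropy μ (fun ω => (Y ω, Z ω, R ω)) :=
    entropy_comp_equiv μ (fun ω => (Y ω, Z ω, R ω)) e
  have h2 : entropy μ (fun ω => (X ω, Z ω, Y ω, R ω)) =
      entropy μ (fun ω => (X ω, Y ω, Z ω, R ω)) :=
    entropy_comp_equiv μ (fun ω => (X ω, Y ω, Z ω, R ω)) ((Equiv.refl S).prodCongr e)
  simp only [condMutualInfo] at hnn hzero ⊢
  linarith
end

section
/- Direct-sum (superadditivity) of mutual information under conditional independence: Let X, Π and Y₁, …, Y_m be random variables on a probability space taking values in finite types, and suppose Y₁, …, Y_m are mutually independent conditioned on X (i.e., conditioned on X = x for every value x of positive probability, the Y_j are mutually independent). Then I(Y₁, …, Y_m : Π | X) ≥ ∑_{j=1}^m I(Y_j : Π | X), where the left-hand side is the conditional mutual information between the tuple (Y₁,…,Y_m) and Π given X. -/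
/-!
Expanding mutual informations into entropies,
`I(Y : Π | X) - ∑ⱼ I(Yⱼ : Π | X)` equals
`(H(Y | X) - ∑ⱼ H(Yⱼ | X)) + (∑ⱼ H(Yⱼ | Π, X) - H(Y | Π, X))`.
The first bracket vanishes because the `Yⱼ` are independent given `X` (`entropy_tuple_eq`), and the
second is nonnegative by subadditivity of conditional entropy (`entropy_tuple_le`).

Both facts come from comparing the law of `(Y, Z)` with the weight
`q(s, z) = P(Z = z) ∏ⱼ P(Yⱼ = sⱼ | Z = z)`, whose cross-entropy against that law is
`H(Z) + ∑ⱼ H(Yⱼ | Z)` (`cross_entropy_condProd`). Conditional independence given `Z` says that `q`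
is the law of `(Y, Z)`; in general, Gibbs' inequality applies since `q` has the same total mass.
-/

open MeasureTheory

/-- The law of `f ∘ W` is the push-forward of the law of `W`. -/
theorem distOf_comp {Ω A B : Type*} [MeasurableSpace Ω] (μ : Measure Ω) [IsFiniteMeasure μ]
    [Fintype A] [DecidableEq B] (W : Ω → A) (hW : ∀ a, MeasurableSet (W ⁻¹' {a}))
    (f : A → B) (b : B) :
    distOf μ (fun ω => f (W ω)) b = ∑ a, if f a = b then distOf μ W a else 0 := by
  rw [← Finset.sum_filter]
  have h : (fun ω => f (W ω)) ⁻¹' {b} =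
      ⋃ a ∈ Finset.univ.filter (fun a => f a = b), W ⁻¹' {a} := by
    ext ω; simp
  have hd : Set.PairwiseDisjoint (↑(Finset.univ.filter (fun a => f a = b)))
      (fun a => W ⁻¹' {a}) := by
    intro a _ c _ hac
    exact Disjoint.preimage _ (Set.disjoint_singleton.2 hac)
  unfold distOf
  rw [h, measure_biUnion_finset hd (fun a _ => hW a),
    ENNReal.toReal_sum (fun a _ => measure_ne_top μ _)]

theorem distOf_nonneg_s7 {Ω A : Type*} [MeasurableSpace Ω] (μ : Measure Ω) (W : Ω → A) (a : A) :
    0 ≤ distOf μ W a := ENNReal.toReal_nonneg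

theorem distOf_le_comp {Ω A B : Type*} [MeasurableSpace Ω] (μ : Measure Ω) [IsFiniteMeasure μ]
    (W : Ω → A) (f : A → B) (a : A) :
    distOf μ W a ≤ distOf μ (fun ω => f (W ω)) (f a) := by
  refine ENNReal.toReal_mono (measure_ne_top μ _) (measure_mono ?_)
  rintro ω rfl
  rfl

theorem sum_distOf_comp_mul {Ω A B : Type*} [MeasurableSpace Ω] (μ : Measure Ω)
    [IsFiniteMeasure μ] [Fintype A] [Fintype B] (W : Ω → A)
    (hW : ∀ a, MeasurableSet (W ⁻¹' {a})) (f : A → B) (g : B → ℝ) :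
    ∑ b, distOf μ (fun ω => f (W ω)) b * g b = ∑ a, distOf μ W a * g (f a) := by
  classical
  simp_rw [distOf_comp μ W hW f, Finset.sum_mul]
  rw [Finset.sum_comm]
  simp [ite_mul]

theorem entropy_comp_s7 {Ω A B : Type*} [MeasurableSpace Ω] (μ : Measure Ω)
    [IsFiniteMeasure μ] [Fintype A] [Fintype B] (W : Ω → A)
    (hW : ∀ a, MeasurableSet (W ⁻¹' {a})) (f : A → B) :
    entropy μ (fun ω => f (W ω)) =
      ∑ a, distOf μ W a * -Real.logb 2 (distOf μ (fun ω => f (W ω)) (f a)) := by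
  rw [← sum_distOf_comp_mul μ W hW f
    (fun b => -Real.logb 2 (distOf μ (fun ω => f (W ω)) b))]
  simp [entropy]

/-- Gibbs' inequality for a sub-normalised comparison weight `q`. -/
theorem gibbs {A : Type*} [Fintype A] (p q : A → ℝ) (hp : ∀ a, 0 ≤ p a) (hq : ∀ a, 0 ≤ q a)
    (hpq : ∀ a, 0 < p a → 0 < q a) (hsum : ∑ a, q a ≤ ∑ a, p a) :
    ∑ a, -(p a * Real.logb 2 (p a)) ≤ ∑ a, p a * -Real.logb 2 (q a) := by
  have hlog : (0 : ℝ) < Real.log 2 := Real.log_pos one_lt_two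
  have key : ∀ a, -(p a * Real.logb 2 (p a)) - p a * -Real.logb 2 (q a) ≤
      (q a - p a) / Real.log 2 := by
    intro a
    rcases (hp a).eq_or_lt with h | h
    · simpa [← h] using div_nonneg (hq a) hlog.le
    · have h1 := Real.log_le_sub_one_of_pos (div_pos (hpq a h) h)
      rw [Real.log_div (hpq a h).ne' h.ne'] at h1
      have h2 : p a * (Real.log (q a) - Real.log (p a)) ≤ q a - p a := by
        calc _ ≤ p a * (q a / p a - 1) := mul_le_mul_of_nonneg_left h1 h.le
          _ = q a - p a := by field_simp
      calc _ = p a * (Real.log (q a) - Real.log (p a)) / Real.log 2 := by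
            simp only [Real.logb]; ring
        _ ≤ _ := by gcongr
  have h3 := Finset.sum_le_sum (fun a (_ : a ∈ Finset.univ) => key a)
  rw [Finset.sum_sub_distrib, ← Finset.sum_div, Finset.sum_sub_distrib] at h3
  have h4 : (∑ a, q a - ∑ a, p a) / Real.log 2 ≤ 0 :=
    div_nonpos_of_nonpos_of_nonneg (by linarith) hlog.le
  linarith

/-- The weight `(s, z) ↦ P(Z = z) ∏ⱼ P(Yⱼ = sⱼ | Z = z)`: the joint law that `(Y, Z)` would have if
the `Yⱼ` were independent given `Z`. It is `0` where `P(Z = z) = 0`. -/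
noncomputable def condProd {Ω V : Type*} {m : ℕ} {S : Fin m → Type*} [MeasurableSpace Ω]
    (μ : Measure Ω) (Y : ∀ j, Ω → S j) (Z : Ω → V) (a : (∀ j, S j) × V) : ℝ :=
  distOf μ Z a.2 * ∏ j, distOf μ (fun ω => (Y j ω, Z ω)) (a.1 j, a.2) / distOf μ Z a.2

theorem measurableSet_pair {Ω A B : Type*} [MeasurableSpace Ω] (X : Ω → A) (Z : Ω → B)
    (hX : ∀ s, MeasurableSet (X ⁻¹' {s})) (hZ : ∀ z, MeasurableSet (Z ⁻¹' {z})) (a : A × B) :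
    MeasurableSet ((fun ω => (X ω, Z ω)) ⁻¹' {a}) := by
  have h : (fun ω => (X ω, Z ω)) ⁻¹' {a} = X ⁻¹' {a.1} ∩ Z ⁻¹' {a.2} := by
    ext ω; simp [Prod.ext_iff]
  rw [h]
  exact (hX _).inter (hZ _)

theorem measurableSet_tuple_pair {Ω V : Type*} {m : ℕ} {S : Fin m → Type*} [MeasurableSpace Ω]
    (Y : ∀ j, Ω → S j) (Z : Ω → V) (hY : ∀ j s, MeasurableSet (Y j ⁻¹' {s}))
    (hZ : ∀ z, MeasurableSet (Z ⁻¹' {z})) (a : (∀ j, S j) × V) :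
    MeasurableSet ((fun ω => ((fun j => Y j ω), Z ω)) ⁻¹' {a}) := by
  refine measurableSet_pair _ Z (fun s => ?_) hZ a
  have h : (fun ω => (fun j => Y j ω)) ⁻¹' {s} = ⋂ j, Y j ⁻¹' {s j} := by
    ext ω; simp [funext_iff]
  rw [h]
  exact MeasurableSet.iInter fun j => hY j _

theorem marginals_pos_s7 {Ω V : Type*} {m : ℕ} {S : Fin m → Type*} [MeasurableSpace Ω]
    (μ : Measure Ω) [IsFiniteMeasure μ] (Y : ∀ j, Ω → S j) (Z : Ω → V)
    (a : (∀ j, S j) × V)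
    (ha : 0 < distOf μ (fun ω => ((fun j => Y j ω), Z ω)) a) :
    0 < distOf μ Z a.2 ∧ ∀ j, 0 < distOf μ (fun ω => (Y j ω, Z ω)) (a.1 j, a.2) :=
  ⟨ha.trans_le (distOf_le_comp μ (fun ω => ((fun j => Y j ω), Z ω)) Prod.snd a), fun j =>
    ha.trans_le (distOf_le_comp μ (fun ω => ((fun j => Y j ω), Z ω))
      (fun b => (b.1 j, b.2)) a)⟩

section

variable {Ω V : Type*} {m : ℕ} {S : Fin m → Type*} [MeasurableSpace Ω]
  [∀ j, Fintype (S j)] [Fintype V] (μ : Measure Ω) [IsFiniteMeasure μ]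
  (Y : ∀ j, Ω → S j) (Z : Ω → V)

/-- The cross-entropy of the law of `(Y, Z)` against `condProd` is `H(Z) + ∑ⱼ H(Yⱼ | Z)`. -/
theorem cross_entropy_condProd (hY : ∀ j s, MeasurableSet (Y j ⁻¹' {s}))
    (hZ : ∀ z, MeasurableSet (Z ⁻¹' {z})) :
    ∑ a, distOf μ (fun ω => ((fun j => Y j ω), Z ω)) a * -Real.logb 2 (condProd μ Y Z a) =
      entropy μ Z + ∑ j, (entropy μ (fun ω => (Y j ω, Z ω)) - entropy μ Z) := by
  have hW := measurableSet_tuple_pair Y Z hY hZ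
  have e1 := entropy_comp_s7 μ (fun ω => ((fun j => Y j ω), Z ω)) hW Prod.snd
  have e2 := fun j => entropy_comp_s7 μ (fun ω => ((fun j => Y j ω), Z ω)) hW
    (fun b => (b.1 j, b.2))
  dsimp only at e1 e2
  simp_rw [e2]
  rw [e1]
  simp_rw [← Finset.sum_sub_distrib]
  rw [Finset.sum_comm, ← Finset.sum_add_distrib]
  refine Finset.sum_congr rfl fun a _ => ?_
  rcases (distOf_nonneg_s7 μ (fun ω => ((fun j => Y j ω), Z ω)) a).eq_or_lt with h | h
  · simp [← h]
  obtain ⟨h1, h2⟩ := marginals_pos_s7 μ Y Z a h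
  rw [condProd, Real.logb_mul h1.ne'
    (Finset.prod_ne_zero_iff.2 fun j _ => (div_pos (h2 j) h1).ne'),
    Real.logb_prod _ _ (fun j _ => (div_pos (h2 j) h1).ne'), neg_add, mul_add]
  congr 1
  rw [← Finset.sum_neg_distrib, Finset.mul_sum]
  refine Finset.sum_congr rfl fun j _ => ?_
  rw [Real.logb_div (h2 j).ne' h1.ne']
  ring

theorem sum_condProd_le (hY : ∀ j s, MeasurableSet (Y j ⁻¹' {s}))
    (hZ : ∀ z, MeasurableSet (Z ⁻¹' {z})) :
    ∑ a, condProd μ Y Z a ≤ ∑ a, distOf μ (fun ω => ((fun j => Y j ω), Z ω)) a := by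
  classical
  have hW := measurableSet_tuple_pair Y Z hY hZ
  have e := sum_distOf_comp_mul μ (fun ω => ((fun j => Y j ω), Z ω)) hW Prod.snd (fun _ => 1)
  simp only [mul_one] at e
  rw [← e, Fintype.sum_prod_type_right]
  refine Finset.sum_le_sum fun z _ => ?_
  simp only [condProd]
  rw [← Finset.mul_sum]
  rcases (distOf_nonneg_s7 μ Z z).eq_or_lt with h | h
  · simp [← h]
  have hm : ∀ j, ∑ s, distOf μ (fun ω => (Y j ω, Z ω)) (s, z) / distOf μ Z z = 1 := by
    intro j
    have e' := distOf_comp μ (fun ω => (Y j ω, Z ω)) (measurableSet_pair _ Z (hY j) hZ)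
      Prod.snd z
    rw [Fintype.sum_prod_type] at e'
    simp only [Finset.sum_ite_eq', Finset.mem_univ, if_true] at e'
    rw [← Finset.sum_div, ← e', div_self h.ne']
  have hprod := Finset.prod_univ_sum (fun j : Fin m => (Finset.univ : Finset (S j)))
    (fun j s => distOf μ (fun ω => (Y j ω, Z ω)) (s, z) / distOf μ Z z)
  rw [Fintype.piFinset_univ] at hprod
  rw [← hprod]
  simp [hm]

/-- Subadditivity of conditional entropy, `H(Y₁, …, Y_m | Z) ≤ ∑ⱼ H(Yⱼ | Z)`. -/
theorem entropy_tuple_le (hY : ∀ j s, MeasurableSet (Y j ⁻¹' {s}))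
    (hZ : ∀ z, MeasurableSet (Z ⁻¹' {z})) :
    entropy μ (fun ω => ((fun j => Y j ω), Z ω)) ≤
      entropy μ Z + ∑ j, (entropy μ (fun ω => (Y j ω, Z ω)) - entropy μ Z) := by
  rw [← cross_entropy_condProd μ Y Z hY hZ]
  refine gibbs _ _ (distOf_nonneg_s7 μ _) (fun a => ?_) (fun a ha => ?_)
    (sum_condProd_le μ Y Z hY hZ)
  · exact mul_nonneg (distOf_nonneg_s7 μ _ _) (Finset.prod_nonneg fun j _ =>
      div_nonneg (distOf_nonneg_s7 μ _ _) (distOf_nonneg_s7 μ _ _))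
  · obtain ⟨h1, h2⟩ := marginals_pos_s7 μ Y Z a ha
    exact mul_pos h1 (Finset.prod_pos fun j _ => div_pos (h2 j) h1)

/-- Equality `H(Y₁, …, Y_m | Z) = ∑ⱼ H(Yⱼ | Z)` when the `Yⱼ` are independent given `Z`. -/
theorem entropy_tuple_eq (hY : ∀ j s, MeasurableSet (Y j ⁻¹' {s}))
    (hZ : ∀ z, MeasurableSet (Z ⁻¹' {z}))
    (h : ∀ a, distOf μ (fun ω => ((fun j => Y j ω), Z ω)) a = condProd μ Y Z a) :
    entropy μ (fun ω => ((fun j => Y j ω), Z ω)) =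
      entropy μ Z + ∑ j, (entropy μ (fun ω => (Y j ω, Z ω)) - entropy μ Z) := by
  rw [← cross_entropy_condProd μ Y Z hY hZ]
  simp [entropy, h]

end

/-- Direct-sum (superadditivity) of conditional mutual information: if `Y₁, …, Y_m`
are mutually independent conditioned on `X`, then
`I(Y₁,…,Y_m : Π | X) ≥ ∑_j I(Y_j : Π | X)`. -/
theorem condMutualInfo_superadditive
    {Ω SX T : Type*} {m : ℕ} {S : Fin m → Type*} [MeasurableSpace Ω]
    [MeasurableSpace SX] [MeasurableSingletonClass SX] [Fintype SX]
    [∀ j, MeasurableSpace (S j)] [∀ j, MeasurableSingletonClass (S j)]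
    [∀ j, Fintype (S j)]
    [MeasurableSpace T] [MeasurableSingletonClass T] [Fintype T]
    (μ : Measure Ω) [IsProbabilityMeasure μ]
    (X : Ω → SX) (Y : ∀ j, Ω → S j) (P : Ω → T)
    (hX : Measurable X) (hY : ∀ j, Measurable (Y j)) (hP : Measurable P)
    (hindep : ∀ x : SX, μ (X ⁻¹' {x}) ≠ 0 → ∀ s : ∀ j, S j,
      (μ ((⋂ j, Y j ⁻¹' {s j}) ∩ X ⁻¹' {x})).toReal / (μ (X ⁻¹' {x})).toReal =
        ∏ j, (μ (Y j ⁻¹' {s j} ∩ X ⁻¹' {x})).toReal / (μ (X ⁻¹' {x})).toReal) :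
    ∑ j, condMutualInfo μ (Y j) P X ≤
      condMutualInfo μ (fun ω => (fun j => Y j ω)) P X := by
  have hXm : ∀ x, MeasurableSet (X ⁻¹' {x}) := fun x => hX (measurableSet_singleton x)
  have hPm : ∀ t, MeasurableSet (P ⁻¹' {t}) := fun t => hP (measurableSet_singleton t)
  have hYm : ∀ j s, MeasurableSet (Y j ⁻¹' {s}) := fun j s => hY j (measurableSet_singleton s)
  have h1 := entropy_tuple_le μ Y (fun ω => (P ω, X ω)) hYm (measurableSet_pair P X hPm hXm)
  have h2 := entropy_tuple_eq μ Y X hYm hXm (by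
    rintro ⟨s, x⟩
    have pre' : (fun ω => ((fun j => Y j ω), X ω)) ⁻¹' {(s, x)} =
        (⋂ j, Y j ⁻¹' {s j}) ∩ X ⁻¹' {x} := by
      ext ω; simp [funext_iff]
    have pre'' : ∀ j, (fun ω => (Y j ω, X ω)) ⁻¹' {(s j, x)} =
        Y j ⁻¹' {s j} ∩ X ⁻¹' {x} := by
      intro j; ext ω; simp
    simp only [condProd, distOf, pre', pre'']
    by_cases hx : μ (X ⁻¹' {x}) = 0
    · simp [hx, measure_mono_null (Set.inter_subset_right) hx]
    · rw [← hindep x hx s, mul_div_cancel₀]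
      exact ENNReal.toReal_ne_zero.2 ⟨hx, measure_ne_top μ _⟩)
  simp only [condMutualInfo]
  simp only [Finset.sum_sub_distrib, Finset.sum_add_distrib] at h1 h2 ⊢
  linarith
end

section
/- Hash soundness for unbalanced sequences (Schwartz–Zippel step): Let N, U be positive integers and p a prime with p > N. Let c : {0,…,U} → ℤ be a coefficient function with |c(a)| ≤ N for all a and c not identically zero (c(a) is interpreted as the number of insertions of a minus the number of extractions of a in a length-N stream; c ≢ 0 means the stream is unbalanced). Then the number of α ∈ ZMod p with ∑_{a=0}^{U} c(a)·α^a = 0 in ZMod p is at most U; in particular, for α chosen uniformly at random in ZMod p, the probability that the hashcode hash(w) = ∑_{a=0}^{U} c(a)·α^a equals 0 is at most U/p. -/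
/-! Modulo `p` the coefficients `c a` define a polynomial of degree at most `U` whose roots are
exactly the `α` with zero hash. It is nonzero, because a nonzero integer of absolute value at most
`N < p` is not divisible by `p`; hence it has at most `U` roots in the field `ZMod p`. -/

/-- Hash soundness for unbalanced sequences (Schwartz–Zippel step): if `c : {0,…,U} → ℤ`
has `|c a| ≤ N < p` for all `a ≤ U` and is not identically zero there, then the number of
`α ∈ ZMod p` with `∑_{a=0}^{U} c(a)·α^a = 0` is at most `U`; in particular, a uniformly
random `α` gives a zero hashcode with probability at most `U/p`. -/
theorem hash_soundness (N U : ℕ) (hN : 0 < N) (hU : 0 < U)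
    (p : ℕ) (hp : p.Prime) (hNp : N < p)
    (c : ℕ → ℤ) (hbd : ∀ a, a ≤ U → |c a| ≤ (N : ℤ))
    (hne : ∃ a, a ≤ U ∧ c a ≠ 0) :
    {α : ZMod p | ∑ a ∈ Finset.range (U + 1), (c a : ZMod p) * α ^ a = 0}.ncard ≤ U ∧
      ({α : ZMod p | ∑ a ∈ Finset.range (U + 1), (c a : ZMod p) * α ^ a = 0}.ncard : ℝ) / p ≤
        (U : ℝ) / p := by
  have : Fact p.Prime := ⟨hp⟩
  set S := {α : ZMod p | ∑ a ∈ Finset.range (U + 1), (c a : ZMod p) * α ^ a = 0} with hS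
  have key : S.ncard ≤ U := by
    let P : Polynomial (ZMod p) :=
      ∑ a ∈ Finset.range (U + 1), Polynomial.monomial a (c a : ZMod p)
    have hP : P ≠ 0 := by
      obtain ⟨b, hb, hcb⟩ := hne
      intro h0
      have hcoeff : P.coeff b = (c b : ZMod p) := by
        simp [P, Polynomial.finsetSum_coeff, Polynomial.coeff_monomial]
        omega
      rw [h0, Polynomial.coeff_zero] at hcoeff
      have hdvd : (p : ℤ) ∣ c b := (ZMod.intCast_zmod_eq_zero_iff_dvd _ _).1 hcoeff.symm
      refine hcb (Int.eq_zero_of_abs_lt_dvd hdvd ?_)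
      exact (hbd b hb).trans_lt (by exact_mod_cast hNp)
    have hdeg : P.natDegree ≤ U := by
      refine Polynomial.natDegree_sum_le_of_forall_le _ _ fun a ha => ?_
      exact (Polynomial.natDegree_monomial_le _).trans
        (Nat.lt_succ_iff.1 (Finset.mem_range.1 ha))
    have hroots : S = (P.roots.toFinset : Set (ZMod p)) := by
      ext α
      simp [hS, P, hP, Polynomial.IsRoot, Polynomial.eval_finsetSum,
        Polynomial.eval_monomial]
    rw [hroots, Set.ncard_coe_finset]
    exact (Multiset.toFinset_card_le _).trans ((Polynomial.card_roots' P).trans hdeg)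
  exact ⟨key, by gcongr⟩
end
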